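/- Let C_λ > 0 and C_q > 0. Let Q and Q̃ be m×m real symmetric positive definite matrices such that every diagonal entry of Q and of Q̃ is at least C_q and the smallest eigenvalues of Q and of Q̃ are each at least C_λ. Set R = diag(Q)^{−1/2} Q diag(Q)^{−1/2}, R̃ = diag(Q̃)^{−1/2} Q̃ diag(Q̃)^{−1/2}, and for η ∈ ℝ^m put ε = R^{1/2} η and ε̃ = R̃^{1/2} η. Then ‖ε εᵀ − ε̃ ε̃ᵀ‖_s ≤ (2√m · ‖η‖₂² / √C_λ) · ((2m+1)/C_q) · (‖Q‖_max^{1/2} + ‖Q̃‖_max^{1/2}) · ‖Q − Q̃‖_s. -/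

import Mathlib

open Matrix

/-- The Euclidean norm `‖x‖₂` on `ℝ^m`. -/
noncomputable def e2 {m : ℕ} (x : Fin m → ℝ) : ℝ := Real.sqrt (∑ i, x i ^ 2)

/-- The spectral norm of a real `m × m` matrix: the operator norm induced by the
Euclidean norm, `‖M‖_s = sup_{x ≠ 0} ‖M x‖₂ / ‖x‖₂`. -/
noncomputable def specNorm {m : ℕ} (M : Matrix (Fin m) (Fin m) ℝ) : ℝ :=
  sSup ((fun x => e2 (M *ᵥ x) / e2 x) '' {x | x ≠ 0})

/-- The correlation matrix associated with a positive definite matrix `Q`: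
`corr Q = diag(Q)^{-1/2} * Q * diag(Q)^{-1/2}`. -/
noncomputable def corr {m : ℕ} (Q : Matrix (Fin m) (Fin m) ℝ) : Matrix (Fin m) (Fin m) ℝ :=
  Matrix.diagonal (fun i => (Real.sqrt (Q i i))⁻¹) * Q *
    Matrix.diagonal (fun i => (Real.sqrt (Q i i))⁻¹)

/-- The max-norm `‖M‖_max` of a matrix: the maximum absolute value of its entries. -/
noncomputable def maxNorm {m : ℕ} (M : Matrix (Fin m) (Fin m) ℝ) : ℝ :=
  ⨆ i, ⨆ j, |M i j|

section helpers

open scoped Matrix.Norms.L2Operator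

variable {m : ℕ}

lemma e2_eq (x : Fin m → ℝ) : e2 x = ‖WithLp.toLp 2 x‖ := by
  simp [e2, EuclideanSpace.norm_eq]

lemma e2_nonneg (x : Fin m → ℝ) : 0 ≤ e2 x := Real.sqrt_nonneg _

lemma e2_sq (x : Fin m → ℝ) : e2 x ^ 2 = x ⬝ᵥ x := by
  rw [e2, Real.sq_sqrt (Finset.sum_nonneg fun i _ => sq_nonneg _)]
  simp [dotProduct, sq]

lemma e2_pos {x : Fin m → ℝ} (hx : x ≠ 0) : 0 < e2 x := by
  rw [e2_eq]; simpa using hx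

lemma e2_mulVec_le (A : Matrix (Fin m) (Fin m) ℝ) (x : Fin m → ℝ) :
    e2 (A *ᵥ x) ≤ ‖A‖ * e2 x := by
  rw [e2_eq, e2_eq]
  exact Matrix.l2_opNorm_mulVec A (WithLp.toLp 2 x)

lemma norm_le_of_e2 (A : Matrix (Fin m) (Fin m) ℝ) (c : ℝ) (hc : 0 ≤ c)
    (h : ∀ x, e2 (A *ᵥ x) ≤ c * e2 x) : ‖A‖ ≤ c := by
  rw [← Matrix.l2_opNorm_toEuclideanCLM]
  refine ContinuousLinearMap.opNorm_le_bound _ hc fun x => ?_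
  have := h x.ofLp
  rw [e2_eq, e2_eq] at this
  exact this

lemma specNorm_eq (A : Matrix (Fin m) (Fin m) ℝ) : specNorm A = ‖A‖ := by
  have hub : ∀ y ∈ ((fun x => e2 (A *ᵥ x) / e2 x) '' {x | x ≠ 0}), y ≤ ‖A‖ := by
    rintro y ⟨x, hx, rfl⟩
    exact (div_le_iff₀ (e2_pos hx)).2 (e2_mulVec_le A x)
  have h0 : 0 ≤ specNorm A := by
    apply Real.sSup_nonneg
    rintro y ⟨x, hx, rfl⟩
    exact div_nonneg (e2_nonneg _) (e2_nonneg _)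
  apply le_antisymm
  · exact Real.sSup_le hub (norm_nonneg _)
  · apply norm_le_of_e2 _ _ h0
    intro x
    by_cases hx : x = 0
    · subst hx; simp [e2]
    · rw [← div_le_iff₀ (e2_pos hx)]
      exact le_csSup ⟨‖A‖, hub⟩ ⟨x, hx, rfl⟩

lemma dot_le (x y : Fin m → ℝ) : |x ⬝ᵥ y| ≤ e2 x * e2 y := by
  rw [← Real.sqrt_sq_eq_abs, e2, e2, ← Real.sqrt_mul (Finset.sum_nonneg fun i _ => sq_nonneg _)]
  apply Real.sqrt_le_sqrt
  exact Finset.sum_mul_sq_le_sq_mul_sq _ _ _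

lemma entry_le (A : Matrix (Fin m) (Fin m) ℝ) (i j : Fin m) : |A i j| ≤ ‖A‖ := by
  have e1 : ∀ k : Fin m, e2 (Pi.single k (1 : ℝ)) = 1 := by
    intro k
    rw [e2_eq]; simp
  have h := dot_le (Pi.single i (1 : ℝ)) (A *ᵥ Pi.single j 1)
  have h2 := e2_mulVec_le A (Pi.single j 1)
  rw [e1] at h h2
  simp at h h2
  linarith

/-- Operator norm is at most the Frobenius norm. -/
lemma norm_le_frob (A : Matrix (Fin m) (Fin m) ℝ) : ‖A‖ ≤ Real.sqrt (∑ i, ∑ j, A i j ^ 2) := by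
  apply norm_le_of_e2 _ _ (Real.sqrt_nonneg _)
  intro x
  have h0 : (0 : ℝ) ≤ ∑ i, ∑ j, A i j ^ 2 :=
    Finset.sum_nonneg fun i _ => Finset.sum_nonneg fun j _ => sq_nonneg _
  rw [e2, e2, ← Real.sqrt_mul h0]
  apply Real.sqrt_le_sqrt
  rw [Finset.sum_mul]
  exact Finset.sum_le_sum fun i _ => Finset.sum_mul_sq_le_sq_mul_sq Finset.univ (fun j => A i j) x

lemma norm_sqrt_corr {Q S : Matrix (Fin m) (Fin m) ℝ} (hd : ∀ i, 0 < Q i i)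
    (hS : S.PosSemidef) (hSS : S * S = corr Q) : ‖S‖ ≤ Real.sqrt m := by
  refine (norm_le_frob S).trans (Real.sqrt_le_sqrt (le_of_eq ?_))
  have h1 : ∀ i, ∑ j, S i j ^ 2 = 1 := by
    intro i
    have h2 : (S * S) i i = 1 := by
      rw [hSS, corr]
      simp only [Matrix.mul_diagonal, Matrix.diagonal_mul]
      have := Real.sqrt_pos.2 (hd i)
      have h3 := Real.mul_self_sqrt (hd i).le
      field_simp
      nlinarith
    rw [← h2, Matrix.mul_apply]
    refine Finset.sum_congr rfl fun j _ => ?_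
    have := hS.1.apply i j
    simp at this
    rw [sq, this]
  simp [h1]

lemma quad_lower {A : Matrix (Fin m) (Fin m) ℝ} (hA : A.IsHermitian) (c : ℝ)
    (h : ∀ i, c ≤ hA.eigenvalues i) (x : Fin m → ℝ) : c * (x ⬝ᵥ x) ≤ x ⬝ᵥ (A *ᵥ x) := by
  set U : Matrix (Fin m) (Fin m) ℝ := (hA.eigenvectorUnitary).1 with hU
  have hs : A = U * Matrix.diagonal hA.eigenvalues * Uᵀ := by
    have := hA.spectral_theorem
    simpa [Unitary.conjStarAlgAut_apply, Matrix.star_eq_conjTranspose] using this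
  have hUU : U * Uᵀ = 1 := by
    have := Unitary.mul_star_self_of_mem hA.eigenvectorUnitary.2
    simpa [Matrix.star_eq_conjTranspose] using this
  have hx : x ⬝ᵥ x = (Uᵀ *ᵥ x) ⬝ᵥ (Uᵀ *ᵥ x) := by
    rw [Matrix.dotProduct_mulVec, Matrix.vecMul_transpose, Matrix.mulVec_mulVec, hUU, Matrix.one_mulVec]
  have hAx : x ⬝ᵥ (A *ᵥ x) = (Uᵀ *ᵥ x) ⬝ᵥ (Matrix.diagonal hA.eigenvalues *ᵥ (Uᵀ *ᵥ x)) := by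
    conv_lhs => rw [hs, ← Matrix.mulVec_mulVec, ← Matrix.mulVec_mulVec, Matrix.dotProduct_mulVec,
      ← Matrix.mulVec_transpose]
  rw [hx, hAx]
  simp only [dotProduct, Matrix.mulVec_diagonal, Finset.mul_sum]
  refine Finset.sum_le_sum fun i _ => ?_
  nlinarith [h i, mul_self_nonneg ((Uᵀ *ᵥ x) i)]

lemma norm_le_of_eigen {A : Matrix (Fin m) (Fin m) ℝ} (hA : A.IsHermitian) (c : ℝ) (hc : 0 ≤ c)
    (h : ∀ i, |hA.eigenvalues i| ≤ c) : ‖A‖ ≤ c := by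
  rw [hA.spectral_theorem, Unitary.conjStarAlgAut_apply, ← Unitary.coe_star, CStarRing.norm_mul_coe_unitary,
    CStarRing.norm_coe_unitary_mul, Matrix.l2_opNorm_diagonal]
  exact (pi_norm_le_iff_of_nonneg hc).2 fun i => by simpa using h i

lemma eigen_vec {A : Matrix (Fin m) (Fin m) ℝ} (hA : A.IsHermitian) (i : Fin m) :
    ∃ v : Fin m → ℝ, v ⬝ᵥ v = 1 ∧ A *ᵥ v = hA.eigenvalues i • v := by
  refine ⟨hA.eigenvectorBasis i, ?_, hA.mulVec_eigenvectorBasis i⟩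
  rw [← e2_sq, e2_eq]
  have := hA.eigenvectorBasis.orthonormal.1 i
  simp [this]

lemma sylvester {S S' : Matrix (Fin m) (Fin m) ℝ} (hS : S.IsHermitian) (hS' : S'.IsHermitian)
    (a b : ℝ) (hab : 0 < a + b) (ha : ∀ x, a * (x ⬝ᵥ x) ≤ x ⬝ᵥ (S *ᵥ x))
    (hb : ∀ x, b * (x ⬝ᵥ x) ≤ x ⬝ᵥ (S' *ᵥ x)) :
    ‖S - S'‖ ≤ ‖S * S - S' * S'‖ / (a + b) := by
  have hX := hS.sub hS'
  refine norm_le_of_eigen hX _ (by positivity) fun i => ?_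
  obtain ⟨v, hv, hXv⟩ := eigen_vec hX i
  set l := hX.eigenvalues i
  have hid : S * S - S' * S' = S * (S - S') + (S - S') * S' := by noncomm_ring
  have hsym : v ⬝ᵥ ((S - S') *ᵥ (S' *ᵥ v)) = l * (v ⬝ᵥ (S' *ᵥ v)) := by
    rw [Matrix.dotProduct_mulVec]
    have : v ᵥ* (S - S') = (S - S') *ᵥ v := by
      rw [← Matrix.mulVec_transpose]
      have h := hX.eq
      rw [Matrix.conjTranspose_eq_transpose_of_trivial] at h
      rw [h]
    rw [this, hXv, smul_dotProduct, smul_eq_mul]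
  have hq : v ⬝ᵥ ((S * S - S' * S') *ᵥ v) = l * (v ⬝ᵥ (S *ᵥ v) + v ⬝ᵥ (S' *ᵥ v)) := by
    rw [hid, Matrix.add_mulVec, dotProduct_add, ← Matrix.mulVec_mulVec, ← Matrix.mulVec_mulVec,
      hsym, hXv, Matrix.mulVec_smul, dotProduct_smul, smul_eq_mul]
    ring
  have he : e2 v = 1 := by
    have h1 := e2_sq v
    rw [hv] at h1
    have := e2_nonneg v
    nlinarith
  have h1 := dot_le v ((S * S - S' * S') *ᵥ v)
  have h2 := e2_mulVec_le (S * S - S' * S') v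
  rw [he] at h1 h2
  rw [le_div_iff₀ hab]
  have h3 := ha v
  have h4 := hb v
  rw [hv] at h3 h4
  rw [hq, abs_mul] at h1
  have h5 := le_abs_self (v ⬝ᵥ (S *ᵥ v) + v ⬝ᵥ (S' *ᵥ v))
  have h6 : |l| * (a + b) ≤ |l| * |v ⬝ᵥ (S *ᵥ v) + v ⬝ᵥ (S' *ᵥ v)| :=
    mul_le_mul_of_nonneg_left (by linarith) (abs_nonneg _)
  linarith

lemma diag_le_maxNorm (Q : Matrix (Fin m) (Fin m) ℝ) (i : Fin m) : Q i i ≤ maxNorm Q := by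
  refine (le_abs_self _).trans ?_
  refine (le_ciSup (f := fun j => |Q i j|) (Set.finite_range _).bddAbove i).trans ?_
  exact le_ciSup (f := fun i => ⨆ j, |Q i j|) (Set.finite_range _).bddAbove i

lemma sqrt_lower {Q S : Matrix (Fin m) (Fin m) ℝ} {Cl : ℝ} (hm : 0 < m) (hCl : 0 < Cl)
    (hQ : Q.PosDef) (hd : ∀ i, 0 < Q i i) (hl : Cl ≤ sInf (spectrum ℝ Q))
    (hS : S.PosSemidef) (hSS : S * S = corr Q) (x : Fin m → ℝ) :
    (Real.sqrt Cl / Real.sqrt (maxNorm Q)) * (x ⬝ᵥ x) ≤ x ⬝ᵥ (S *ᵥ x) := by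
  have hM : 0 < maxNorm Q := (hd ⟨0, hm⟩).trans_le (diag_le_maxNorm Q ⟨0, hm⟩)
  refine quad_lower hS.1 _ (fun i => ?_) x
  obtain ⟨v, hv, hSv⟩ := eigen_vec hS.1 i
  set s := hS.1.eigenvalues i with hs
  have hs0 : 0 ≤ s := hS.eigenvalues_nonneg i
  have h1 : v ⬝ᵥ (corr Q *ᵥ v) = s ^ 2 := by
    rw [← hSS, ← Matrix.mulVec_mulVec, hSv, Matrix.mulVec_smul, hSv, dotProduct_smul,
      dotProduct_smul, hv]
    simp [sq]
  set w : Fin m → ℝ := fun i => (Real.sqrt (Q i i))⁻¹ * v i with hw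
  have h2 : v ⬝ᵥ (corr Q *ᵥ v) = w ⬝ᵥ (Q *ᵥ w) := by
    have hdw : Matrix.diagonal (fun i => (Real.sqrt (Q i i))⁻¹) *ᵥ v = w := by
      ext i; simp [hw, Matrix.mulVec_diagonal]
    have hdw' : v ᵥ* Matrix.diagonal (fun i => (Real.sqrt (Q i i))⁻¹) = w := by
      ext i; simp [hw, Matrix.vecMul_diagonal, mul_comm]
    rw [corr, ← Matrix.mulVec_mulVec, ← Matrix.mulVec_mulVec, hdw, Matrix.dotProduct_mulVec, hdw']
  have h3 : Cl * (w ⬝ᵥ w) ≤ w ⬝ᵥ (Q *ᵥ w) := by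
    refine quad_lower hQ.1 _ (fun i => hl.trans ?_) w
    exact csInf_le (Matrix.finite_real_spectrum).bddBelow (hQ.1.eigenvalues_mem_spectrum_real i)
  have h4 : (maxNorm Q)⁻¹ * (v ⬝ᵥ v) ≤ w ⬝ᵥ w := by
    simp only [dotProduct, Finset.mul_sum]
    refine Finset.sum_le_sum fun i _ => ?_
    have e : w i * w i = (Q i i)⁻¹ * (v i * v i) := by
      have : (Q i i)⁻¹ = (Real.sqrt (Q i i))⁻¹ * (Real.sqrt (Q i i))⁻¹ := by
        rw [← mul_inv, Real.mul_self_sqrt (hd i).le]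
      rw [this]; simp only [hw]; ring
    rw [e]
    exact mul_le_mul_of_nonneg_right (inv_anti₀ (hd i) (diag_le_maxNorm Q i)) (mul_self_nonneg _)
  rw [hv, mul_one] at h4
  rw [← Real.sqrt_div hCl.le]
  apply Real.sqrt_le_iff.2 ⟨hs0, ?_⟩
  rw [← h1, h2, div_eq_mul_inv]
  exact (mul_le_mul_of_nonneg_left h4 hCl.le).trans h3

lemma ratio_bound {C q q' d : ℝ} (hC : 0 < C) (hq : C ≤ q) (hq' : C ≤ q') (h : |q - q'| ≤ d) :
    |1 - Real.sqrt q * (Real.sqrt q')⁻¹| ≤ d / C := by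
  have h1 : Real.sqrt C ≤ Real.sqrt q := Real.sqrt_le_sqrt hq
  have h2 : Real.sqrt C ≤ Real.sqrt q' := Real.sqrt_le_sqrt hq'
  have h0 : 0 < Real.sqrt C := Real.sqrt_pos.2 hC
  have e0 : Real.sqrt C * Real.sqrt C = C := Real.mul_self_sqrt hC.le
  have e1 : Real.sqrt q * Real.sqrt q = q := Real.mul_self_sqrt (hC.le.trans hq)
  have e2 : Real.sqrt q' * Real.sqrt q' = q' := Real.mul_self_sqrt (hC.le.trans hq')
  set c := Real.sqrt C
  set s := Real.sqrt q
  set t := Real.sqrt q'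
  have ht : 0 < t := by linarith
  have hs : 0 < s := by linarith
  have e : 1 - s * t⁻¹ = (q' - q) / (t * (s + t)) := by
    rw [← e1, ← e2]; field_simp; ring
  rw [e, abs_div, abs_of_pos (by positivity : 0 < t * (s + t)), abs_sub_comm]
  have hd : 0 ≤ d := (abs_nonneg _).trans h
  refine div_le_div₀ hd h hC ?_
  nlinarith

lemma norm_diag_le (v : Fin m → ℝ) (c : ℝ) (hc : 0 ≤ c) (h : ∀ i, |v i| ≤ c) :
    ‖(Matrix.diagonal v : Matrix (Fin m) (Fin m) ℝ)‖ ≤ c := by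
  rw [Matrix.l2_opNorm_diagonal]
  exact (pi_norm_le_iff_of_nonneg hc).2 fun i => by simpa using h i

lemma corr_diff {Q Q' : Matrix (Fin m) (Fin m) ℝ} {C : ℝ} (hC : 0 < C)
    (hd : ∀ i, C ≤ Q i i) (hd' : ∀ i, C ≤ Q' i i) (hR : ‖corr Q‖ ≤ m) (hR' : ‖corr Q'‖ ≤ m) :
    ‖corr Q - corr Q'‖ ≤ ((2 * m + 1) / C) * ‖Q - Q'‖ := by
  set D : Matrix (Fin m) (Fin m) ℝ := Matrix.diagonal (fun i => (Real.sqrt (Q i i))⁻¹) with hD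
  set D' : Matrix (Fin m) (Fin m) ℝ := Matrix.diagonal (fun i => (Real.sqrt (Q' i i))⁻¹) with hD'
  set E : Matrix (Fin m) (Fin m) ℝ :=
    Matrix.diagonal (fun i => 1 - Real.sqrt (Q i i) * (Real.sqrt (Q' i i))⁻¹) with hE
  set E' : Matrix (Fin m) (Fin m) ℝ :=
    Matrix.diagonal (fun i => 1 - Real.sqrt (Q' i i) * (Real.sqrt (Q i i))⁻¹) with hE'
  have p : ∀ i, 0 < Real.sqrt (Q i i) := fun i => Real.sqrt_pos.2 (hC.trans_le (hd i))
  have p' : ∀ i, 0 < Real.sqrt (Q' i i) := fun i => Real.sqrt_pos.2 (hC.trans_le (hd' i))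
  have f1 : D * E = D - D' := by
    rw [hD, hD', hE, Matrix.diagonal_mul_diagonal, Matrix.diagonal_sub]
    congr 1; ext i
    have := p i
    field_simp
  have f2 : E' * D' = D' - D := by
    rw [hD, hD', hE', Matrix.diagonal_mul_diagonal, Matrix.diagonal_sub]
    congr 1; ext i
    have := p' i
    field_simp
  have key : corr Q - corr Q' = corr Q * E + D * (Q - Q') * D' - E' * corr Q' := by
    have a1 : corr Q * E = D * Q * (D - D') := by rw [← f1, corr]; noncomm_ring
    have a2 : E' * corr Q' = (D' - D) * Q' * D' := by rw [← f2, corr]; noncomm_ring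
    rw [a1, a2, corr, corr]; noncomm_ring
  set d := ‖Q - Q'‖ with hdd
  have hd0 : 0 ≤ d := norm_nonneg _
  have ent : ∀ i, |Q i i - Q' i i| ≤ d := fun i => entry_le (Q - Q') i i
  have nE : ‖E‖ ≤ d / C := norm_diag_le _ _ (by positivity) fun i =>
    ratio_bound hC (hd i) (hd' i) (ent i)
  have nE' : ‖E'‖ ≤ d / C := norm_diag_le _ _ (by positivity) fun i =>
    ratio_bound hC (hd' i) (hd i) (by rw [abs_sub_comm]; exact ent i)
  have aux : ∀ q, C ≤ q → |(Real.sqrt q)⁻¹| ≤ (Real.sqrt C)⁻¹ := by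
    intro q hq
    rw [abs_of_nonneg (by positivity)]
    exact inv_anti₀ (Real.sqrt_pos.2 hC) (Real.sqrt_le_sqrt hq)
  have nD : ‖D‖ ≤ (Real.sqrt C)⁻¹ := norm_diag_le _ _ (by positivity) fun i => aux _ (hd i)
  have nD' : ‖D'‖ ≤ (Real.sqrt C)⁻¹ := norm_diag_le _ _ (by positivity) fun i => aux _ (hd' i)
  have t1 : ‖corr Q * E‖ ≤ m * (d / C) :=
    (norm_mul_le _ _).trans (mul_le_mul hR nE (norm_nonneg _) (by positivity))
  have t3 : ‖E' * corr Q'‖ ≤ (d / C) * m :=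
    (norm_mul_le _ _).trans (mul_le_mul nE' hR' (norm_nonneg _) (by positivity))
  have t2 : ‖D * (Q - Q') * D'‖ ≤ (Real.sqrt C)⁻¹ * d * (Real.sqrt C)⁻¹ :=
    (norm_mul_le _ _).trans (mul_le_mul ((norm_mul_le _ _).trans
      (mul_le_mul_of_nonneg_right nD hd0)) nD' (norm_nonneg _) (by positivity))
  have e : (Real.sqrt C)⁻¹ * d * (Real.sqrt C)⁻¹ = d / C := by
    have : C⁻¹ = (Real.sqrt C)⁻¹ * (Real.sqrt C)⁻¹ := by
      rw [← mul_inv, Real.mul_self_sqrt hC.le]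
    rw [div_eq_mul_inv, this]; ring
  rw [e] at t2
  have e' : ((2 * m + 1) / C) * d = m * (d / C) + d / C + (d / C) * m := by ring
  rw [key, e']
  refine (norm_sub_le _ _).trans (add_le_add ((norm_add_le _ _).trans (add_le_add t1 t2)) t3)

lemma norm_vecMulVec_le (x y : Fin m → ℝ) : ‖Matrix.vecMulVec x y‖ ≤ e2 x * e2 y := by
  apply norm_le_of_e2 _ _ (mul_nonneg (e2_nonneg _) (e2_nonneg _))
  intro z
  have : Matrix.vecMulVec x y *ᵥ z = (y ⬝ᵥ z) • x := by
    ext i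
    simp only [Matrix.mulVec, dotProduct, Matrix.vecMulVec_apply, Pi.smul_apply, smul_eq_mul,
      Finset.sum_mul]
    exact Finset.sum_congr rfl fun j _ => by ring
  rw [this, e2_eq, WithLp.toLp_smul, norm_smul, ← e2_eq, Real.norm_eq_abs]
  have := mul_le_mul_of_nonneg_right (dot_le y z) (e2_nonneg x)
  linarith

lemma final_bound {Cl Cq : ℝ} (hm : 0 < m) (hCl : 0 < Cl) (hCq : 0 < Cq)
    {Q Q' : Matrix (Fin m) (Fin m) ℝ} (hQ : Q.PosDef) (hQ' : Q'.PosDef)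
    (hdQ : ∀ i, Cq ≤ Q i i) (hdQ' : ∀ i, Cq ≤ Q' i i)
    (hlQ : Cl ≤ sInf (spectrum ℝ Q)) (hlQ' : Cl ≤ sInf (spectrum ℝ Q'))
    (η : Fin m → ℝ) {S S' : Matrix (Fin m) (Fin m) ℝ}
    (hS : S.PosSemidef) (hSS : S * S = corr Q)
    (hS' : S'.PosSemidef) (hSS' : S' * S' = corr Q') :
    specNorm (Matrix.vecMulVec (S *ᵥ η) (S *ᵥ η) - Matrix.vecMulVec (S' *ᵥ η) (S' *ᵥ η))
      ≤ (2 * Real.sqrt m * (∑ i, η i ^ 2) / Real.sqrt Cl) * ((2 * m + 1) / Cq) *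
        (Real.sqrt (maxNorm Q) + Real.sqrt (maxNorm Q')) * specNorm (Q - Q') := by
  have hp : ∀ i, 0 < Q i i := fun i => hCq.trans_le (hdQ i)
  have hp' : ∀ i, 0 < Q' i i := fun i => hCq.trans_le (hdQ' i)
  rw [specNorm_eq, specNorm_eq]
  have nS := norm_sqrt_corr hp hS hSS
  have nS' := norm_sqrt_corr hp' hS' hSS'
  have hmm : Real.sqrt m * Real.sqrt m = (m : ℝ) := Real.mul_self_sqrt (Nat.cast_nonneg m)
  have nR : ‖corr Q‖ ≤ m := by
    rw [← hSS, ← hmm]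
    exact (norm_mul_le _ _).trans (mul_le_mul nS nS (norm_nonneg _) (Real.sqrt_nonneg _))
  have nR' : ‖corr Q'‖ ≤ m := by
    rw [← hSS', ← hmm]
    exact (norm_mul_le _ _).trans (mul_le_mul nS' nS' (norm_nonneg _) (Real.sqrt_nonneg _))
  have hcd := corr_diff hCq hdQ hdQ' nR nR'
  have hM : 0 < maxNorm Q := (hp ⟨0, hm⟩).trans_le (diag_le_maxNorm Q ⟨0, hm⟩)
  have hM' : 0 < maxNorm Q' := (hp' ⟨0, hm⟩).trans_le (diag_le_maxNorm Q' ⟨0, hm⟩)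
  have c0 : 0 < Real.sqrt Cl := Real.sqrt_pos.2 hCl
  have a0 : 0 < Real.sqrt (maxNorm Q) := Real.sqrt_pos.2 hM
  have b0 : 0 < Real.sqrt (maxNorm Q') := Real.sqrt_pos.2 hM'
  have hsyl := sylvester hS.1 hS'.1 _ _ (by positivity)
    (sqrt_lower hm hCl hQ hp hlQ hS hSS) (sqrt_lower hm hCl hQ' hp' hlQ' hS' hSS')
  rw [hSS, hSS'] at hsyl
  set c := Real.sqrt Cl
  set a := Real.sqrt (maxNorm Q)
  set b := Real.sqrt (maxNorm Q')
  have hfrac : 1 / (c / a + c / b) ≤ (a + b) / c := by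
    rw [div_le_div_iff₀ (by positivity) c0]
    have : (a + b) * (c / a + c / b) = c * ((a + b) * (a + b) / (a * b)) := by
      field_simp
      ring
    rw [this, one_mul]
    refine le_mul_of_one_le_right c0.le ?_
    rw [le_div_iff₀ (by positivity)]
    nlinarith [mul_pos a0 b0]
  have hX : ‖S - S'‖ ≤ ((2 * m + 1) / Cq * ‖Q - Q'‖) * ((a + b) / c) := by
    refine hsyl.trans ?_
    rw [div_eq_mul_one_div]
    exact mul_le_mul hcd hfrac (by positivity) (by positivity)
  have hη : ∑ i, η i ^ 2 = e2 η * e2 η := by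
    rw [← sq, e2_sq]; simp [dotProduct, sq]
  have n0 := e2_nonneg η
  have v1 : e2 (S *ᵥ η) ≤ Real.sqrt m * e2 η :=
    (e2_mulVec_le _ _).trans (mul_le_mul_of_nonneg_right nS n0)
  have v2 : e2 (S' *ᵥ η) ≤ Real.sqrt m * e2 η :=
    (e2_mulVec_le _ _).trans (mul_le_mul_of_nonneg_right nS' n0)
  have v3 := e2_mulVec_le (S - S') η
  have hdec : Matrix.vecMulVec (S *ᵥ η) (S *ᵥ η) - Matrix.vecMulVec (S' *ᵥ η) (S' *ᵥ η)
      = Matrix.vecMulVec (S *ᵥ η) ((S - S') *ᵥ η) + Matrix.vecMulVec ((S - S') *ᵥ η) (S' *ᵥ η) := by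
    ext i j
    simp only [Matrix.sub_mulVec, Matrix.vecMulVec_apply, Matrix.sub_apply, Matrix.add_apply,
      Pi.sub_apply]
    ring
  have x0 : 0 ≤ ‖S - S'‖ := norm_nonneg _
  calc _ ≤ e2 (S *ᵥ η) * e2 ((S - S') *ᵥ η) + e2 ((S - S') *ᵥ η) * e2 (S' *ᵥ η) := by
        rw [hdec]
        exact (norm_add_le _ _).trans (add_le_add (norm_vecMulVec_le _ _) (norm_vecMulVec_le _ _))
    _ ≤ (Real.sqrt m * e2 η) * (‖S - S'‖ * e2 η) + (‖S - S'‖ * e2 η) * (Real.sqrt m * e2 η) := by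
        have := e2_nonneg ((S - S') *ᵥ η)
        have := e2_nonneg (S' *ᵥ η)
        gcongr
    _ = (2 * Real.sqrt m * (e2 η * e2 η)) * ‖S - S'‖ := by ring
    _ ≤ (2 * Real.sqrt m * (e2 η * e2 η)) * (((2 * m + 1) / Cq * ‖Q - Q'‖) * ((a + b) / c)) :=
        mul_le_mul_of_nonneg_left hX (by positivity)
    _ = _ := by rw [hη]; ring

end helpers

/-- Let `Q, Q̃` be real symmetric positive definite with diagonal entries
at least `C_q > 0` and smallest eigenvalues at least `C_λ > 0`, let `R, R̃` be the
associated correlation matrices with positive semidefinite square roots `S, S̃`, and for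
`η ∈ ℝ^m` put `ε = S η`, `ε̃ = S̃ η`.  Then
`‖ε εᵀ − ε̃ ε̃ᵀ‖_s ≤ (2√m ‖η‖₂²/√C_λ) ((2m+1)/C_q) (‖Q‖_max^{1/2} + ‖Q̃‖_max^{1/2}) ‖Q − Q̃‖_s`. -/
theorem stmt8 (m : ℕ) (hm : 0 < m) (Cl Cq : ℝ) (hCl : 0 < Cl) (hCq : 0 < Cq)
    (Q Q' : Matrix (Fin m) (Fin m) ℝ) (hQ : Q.PosDef) (hQ' : Q'.PosDef)
    (hdQ : ∀ i, Cq ≤ Q i i) (hdQ' : ∀ i, Cq ≤ Q' i i)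
    (hlQ : Cl ≤ sInf (spectrum ℝ Q)) (hlQ' : Cl ≤ sInf (spectrum ℝ Q'))
    (η : Fin m → ℝ)
    (S S' : Matrix (Fin m) (Fin m) ℝ)
    (hS : S.PosSemidef) (hSS : S * S = corr Q)
    (hS' : S'.PosSemidef) (hSS' : S' * S' = corr Q') :
    specNorm (Matrix.vecMulVec (S *ᵥ η) (S *ᵥ η) - Matrix.vecMulVec (S' *ᵥ η) (S' *ᵥ η))
      ≤ (2 * Real.sqrt m * (∑ i, η i ^ 2) / Real.sqrt Cl) * ((2 * m + 1) / Cq) *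
        (Real.sqrt (maxNorm Q) + Real.sqrt (maxNorm Q')) * specNorm (Q - Q') := by
  exact final_bound hm hCl hCq hQ hQ' hdQ hdQ' hlQ hlQ' η hS hSS hS' hSS'
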